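/- arXiv:1910.06035 — 4 statements merged into one kernel-verified Lean document; each statement's English description precedes it below -/
import Mathlib

section
/- Let E be an n×n real symmetric positive definite matrix (viewed as complex Hermitian), F an n×n Hermitian positive definite complex matrix with E ≥ F⁻¹ in the Loewner order, and G an n×n real symmetric positive semidefinite matrix with tr G = 1. Then for every s ∈ [−1,1] with s ≠ 0, (tr(G E^s))^{1/s} ≥ (tr(G F^{−s}))^{1/s}. -/
open Matrix ComplexOrder

/-- The matrix power `X ^ s` of a positive definite Hermitian matrix, defined by applying
`x ↦ x ^ s` to the eigenvalues in a spectral decomposition. -/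
noncomputable def matPow {n : ℕ} {X : Matrix (Fin n) (Fin n) ℂ} (hX : X.IsHermitian)
    (s : ℝ) : Matrix (Fin n) (Fin n) ℂ :=
  hX.cfc (fun x => x ^ s)

section

open scoped MatrixOrder Matrix.Norms.L2Operator

lemma matPow_eq_rpow {n : ℕ} {X : Matrix (Fin n) (Fin n) ℂ} (hX : X.PosDef) (s : ℝ) :
    matPow hX.1 s = X ^ s := by
  rw [CFC.rpow_eq_cfc_real hX.posSemidef.nonneg, hX.1.cfc_eq]
  rfl

lemma trace_mul_re_nonneg {n : ℕ} {G P : Matrix (Fin n) (Fin n) ℂ} (hG : G.PosSemidef)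
    (hP : P.PosSemidef) : 0 ≤ (G * P).trace.re := by
  obtain ⟨B, rfl⟩ := CStarAlgebra.nonneg_iff_eq_star_mul_self.mp hP.nonneg
  rw [← mul_assoc, Matrix.trace_mul_comm, ← mul_assoc]
  exact (Complex.nonneg_iff.mp (hG.mul_mul_conjTranspose_same B).trace_nonneg).1

lemma trace_mul_re_pos {n : ℕ} {G P : Matrix (Fin n) (Fin n) ℂ} (hG : G.PosSemidef)
    (hG0 : G ≠ 0) (hP : P.PosDef) : 0 < (G * P).trace.re := by
  have hu := hP.isUnit
  obtain ⟨B, rfl⟩ := CStarAlgebra.nonneg_iff_eq_star_mul_self.mp hP.posSemidef.nonneg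
  have hB : IsUnit B := by
    rw [Matrix.isUnit_iff_isUnit_det] at hu ⊢
    rw [Matrix.det_mul] at hu
    exact isUnit_of_mul_isUnit_right hu
  have hB' : IsUnit (star B) := hB.star
  rw [← mul_assoc, Matrix.trace_mul_comm, ← mul_assoc]
  have hps := hG.mul_mul_conjTranspose_same B
  have h := hps.trace_nonneg
  have hne : (B * G * star B).trace ≠ 0 := by
    intro h0
    have h1 : B * G * star B = 0 := hps.trace_eq_zero_iff.mp h0
    rw [hB'.mul_left_eq_zero, hB.mul_right_eq_zero] at h1
    exact hG0 h1
  exact (Complex.pos_iff.mp (lt_of_le_of_ne h (Ne.symm hne))).1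

lemma trace_mul_re_mono {n : ℕ} {G P Q : Matrix (Fin n) (Fin n) ℂ} (hG : G.PosSemidef)
    (h : P ≤ Q) : (G * P).trace.re ≤ (G * Q).trace.re := by
  have := trace_mul_re_nonneg hG (Matrix.le_iff.mp h)
  rw [mul_sub, Matrix.trace_sub, Complex.sub_re] at this
  linarith

lemma rpow_neg_eq_inv_rpow {n : ℕ} {X : Matrix (Fin n) (Fin n) ℂ} (hX : X.PosDef) (s : ℝ) :
    X ^ (-s) = X⁻¹ ^ s := by
  have h := CFC.rpow_neg hX.isUnit.unit s hX.posSemidef.nonneg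
  rwa [Matrix.coe_units_inv] at h

lemma qcrb_aux {n : ℕ} (E F G : Matrix (Fin n) (Fin n) ℂ)
    (hE : E.PosDef) (hF : F.PosDef) (hEF : (E - F⁻¹).PosSemidef)
    (hG : G.PosSemidef) (hGtr : G.trace = 1)
    (s : ℝ) (hs : s ∈ Set.Icc (-1 : ℝ) 1) (hs0 : s ≠ 0) :
    ((G * matPow hE.1 s).trace.re) ^ (1/s) ≥ ((G * matPow hF.1 (-s)).trace.re) ^ (1/s) := by
  have hG0 : G ≠ 0 := by
    rintro rfl
    simp at hGtr
  have hle : F⁻¹ ≤ E := hEF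
  rw [matPow_eq_rpow hE, matPow_eq_rpow hF, ge_iff_le]
  rcases lt_or_gt_of_ne hs0 with h | h
  · have hinv : E⁻¹ ≤ F := by
      have := CStarAlgebra.inv_le_inv (a := hF.inv.isUnit.unit) (b := hE.isUnit.unit)
        hF.inv.posSemidef.nonneg hle
      rw [Matrix.coe_units_inv, Matrix.coe_units_inv] at this
      simpa [Matrix.nonsing_inv_nonsing_inv F ((Matrix.isUnit_iff_isUnit_det F).mp hF.isUnit)]
        using this
    have h1 : E ^ s ≤ F ^ (-s) := by
      have := CFC.rpow_le_rpow (p := -s) ⟨by linarith, by linarith [hs.1]⟩ hinv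
      rwa [← rpow_neg_eq_inv_rpow hE, neg_neg] at this
    have hpd : (E ^ s).PosDef := by
      refine (CFC.rpow_nonneg (a := E) (y := s)).posSemidef.posDef_iff_isUnit.mpr ?_
      exact IsUnit.of_mul_eq_one _ (CFC.rpow_mul_rpow_neg s hE.isStrictlyPositive)
    exact Real.rpow_le_rpow_of_nonpos (trace_mul_re_pos hG hG0 hpd) (trace_mul_re_mono hG h1)
      (one_div_nonpos.mpr h.le)
  · have h1 : F ^ (-s) ≤ E ^ s := by
      rw [rpow_neg_eq_inv_rpow hF]
      exact CFC.rpow_le_rpow ⟨h.le, hs.2⟩ hle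
    exact Real.rpow_le_rpow (trace_mul_re_nonneg hG CFC.rpow_nonneg.posSemidef)
      (trace_mul_re_mono hG h1) (one_div_nonneg.mpr h.le)

end

/-- For a real symmetric positive definite `E`, a Hermitian positive definite `F`
with `E ≥ F⁻¹` in the Loewner order, and a real symmetric positive semidefinite weight `G`
with `tr G = 1`, for every `s ∈ [-1,1]` with `s ≠ 0` we have
`(tr (G E^s))^(1/s) ≥ (tr (G F^(-s)))^(1/s)`. -/
theorem generalized_mean_qcrb_pow {n : ℕ} (E F G : Matrix (Fin n) (Fin n) ℂ)
    (hEre : ∀ i j, (E i j).im = 0) (hE : E.PosDef)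
    (hF : F.PosDef)
    (hEF : (E - F⁻¹).PosSemidef)
    (hGre : ∀ i j, (G i j).im = 0) (hG : G.PosSemidef) (hGtr : G.trace = 1)
    (s : ℝ) (hs : s ∈ Set.Icc (-1 : ℝ) 1) (hs0 : s ≠ 0) :
    ((G * matPow hE.1 s).trace.re) ^ (1/s) ≥ ((G * matPow hF.1 (-s)).trace.re) ^ (1/s) := by
  exact qcrb_aux E F G hE hF hEF hG hGtr s hs hs0
end

section
/- Let A be an n×n real symmetric matrix (viewed as complex Hermitian) and B an n×n complex Hermitian matrix with A ≥ B in the Loewner order. Then tr A ≥ tr(Re B) + ‖Im B‖₁, where Re B and Im B are the entrywise real and imaginary parts of B and ‖M‖₁ := tr √(MᴴM) is the trace norm. -/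
open Matrix ComplexOrder

/-- The entrywise real part of a complex matrix, `Re B := (B + B̄)/2`. -/
def reMat {n : ℕ} (B : Matrix (Fin n) (Fin n) ℂ) : Matrix (Fin n) (Fin n) ℂ :=
  fun i j => ((B i j).re : ℂ)

/-- The entrywise imaginary part of a complex matrix, `Im B := (B - B̄)/(2i)`. -/
def imMat {n : ℕ} (B : Matrix (Fin n) (Fin n) ℂ) : Matrix (Fin n) (Fin n) ℂ :=
  fun i j => ((B i j).im : ℂ)

/-- The trace (Schatten-1) norm `‖M‖₁ := tr √(Mᴴ M)`, where the square root of the positive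
semidefinite matrix `Mᴴ M` is taken by applying `√` to the eigenvalues in a spectral
decomposition. -/
noncomputable def traceNorm {n : ℕ} (M : Matrix (Fin n) (Fin n) ℂ) : ℝ :=
  ((Matrix.posSemidef_conjTranspose_mul_self M).1.cfc Real.sqrt).trace.re

theorem traceNorm_eq_sum_abs {n : ℕ} (M H : Matrix (Fin n) (Fin n) ℂ) (hH : H.IsHermitian)
    (hM : Mᴴ * M = H ^ 2) : traceNorm M = ∑ k, |hH.eigenvalues k| := by
  have h1 : (Matrix.posSemidef_conjTranspose_mul_self M).1.cfc Real.sqrt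
      = hH.cfc (fun x => |x|) := by
    rw [← Matrix.IsHermitian.cfc_eq, ← Matrix.IsHermitian.cfc_eq, hM]
    have h := cfc_comp_pow (p := IsSelfAdjoint) Real.sqrt 2 H
      (Real.continuous_sqrt.continuousOn) hH
    simp only [Real.sqrt_sq_eq_abs] at h
    exact h.symm
  unfold traceNorm
  rw [h1, Matrix.IsHermitian.cfc, Unitary.conjStarAlgAut_apply, Matrix.trace_mul_comm,
    ← mul_assoc]
  simp [Matrix.trace]

theorem sum_abs_le_trace {n : ℕ} (P H : Matrix (Fin n) (Fin n) ℂ) (hH : H.IsHermitian)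
    (h1 : (P - H).PosSemidef) (h2 : (P + H).PosSemidef) :
    ∑ k, |hH.eigenvalues k| ≤ P.trace.re := by
  let U : Matrix (Fin n) (Fin n) ℂ := (hH.eigenvectorUnitary).1
  have hUU : U * Uᴴ = 1 := Unitary.coe_mul_star_self hH.eigenvectorUnitary
  have hD : Uᴴ * H * U = diagonal (RCLike.ofReal ∘ hH.eigenvalues) := by
    have := hH.conjStarAlgAut_star_eigenvectorUnitary
    rwa [Unitary.conjStarAlgAut_star_apply] at this
  have hT : P.trace = (Uᴴ * P * U).trace := by
    rw [Matrix.trace_mul_comm, ← mul_assoc, hUU, one_mul]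
  rw [hT, Matrix.trace, Complex.re_sum]
  refine Finset.sum_le_sum fun k _ => ?_
  have e1 := (h1.conjTranspose_mul_mul_same U).diag_nonneg (i := k)
  have e2 := (h2.conjTranspose_mul_mul_same U).diag_nonneg (i := k)
  rw [mul_sub, sub_mul, hD] at e1
  rw [mul_add, add_mul, hD] at e2
  have e1 := (Complex.le_def.1 e1).1
  have e2 := (Complex.le_def.1 e2).1
  simp at e1 e2
  rw [abs_le]
  simp only [Matrix.diag_apply]
  constructor <;> linarith

/-- If `A` is real symmetric (viewed as complex Hermitian), `B` is Hermitian and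
`A ≥ B` in the Loewner order, then `tr A ≥ tr (Re B) + ‖Im B‖₁`. -/
theorem trace_ge_re_add_traceNorm_im {n : ℕ} (A B : Matrix (Fin n) (Fin n) ℂ)
    (hAre : ∀ i j, (A i j).im = 0) (hA : A.IsHermitian)
    (hB : B.IsHermitian)
    (hAB : (A - B).PosSemidef) :
    A.trace.re ≥ (reMat B).trace.re + traceNorm (imMat B) := by
  have hsym : ∀ i j, (B j i).re = (B i j).re ∧ (B j i).im = -(B i j).im := fun i j => by
    have := hB.apply i j
    rw [← this]; simp
  have hAsym : ∀ i j, A j i = A i j := fun i j => by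
    have := hA.apply i j
    rw [← this]
    apply Complex.ext <;> simp [hAre]
  set H : Matrix (Fin n) (Fin n) ℂ := Complex.I • imMat B with hHdef
  have hMt : (imMat B)ᴴ = -imMat B := by
    ext i j
    simp [imMat, (hsym i j).2]
  have hH : H.IsHermitian := by
    rw [Matrix.IsHermitian, hHdef, Matrix.conjTranspose_smul, hMt]
    simp
  have hM : (imMat B)ᴴ * imMat B = H ^ 2 := by
    rw [hMt, hHdef, pow_two, smul_mul_smul_comm, Complex.I_mul_I]
    simp
  have h1 : (A - reMat B) - H = A - B := by
    ext i j
    apply Complex.ext <;> simp [H, reMat, imMat]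
  have h2 : (A - reMat B) + H = (A - B)ᵀ := by
    ext i j
    apply Complex.ext <;> simp [H, reMat, imMat, hAsym i j, (hsym i j).1, (hsym i j).2]
  have key := sum_abs_le_trace (A - reMat B) H hH (h1 ▸ hAB) (h2 ▸ hAB.transpose)
  rw [← traceNorm_eq_sum_abs _ H hH hM, Matrix.trace_sub, Complex.sub_re] at key
  linarith
end

section
/- Let X be an n×n real symmetric positive definite matrix and G an n×n real symmetric positive semidefinite matrix with tr G = 1. Define M_s(X) := (tr(G X^s))^{1/s} for s ∈ [−1,1] with s ≠ 0, and M_0(X) := exp(tr(G log X)). Then the weighted generalized means are comparable: M_r(X) ≤ M_s(X) whenever −1 ≤ r ≤ s ≤ 1. -/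
open Matrix ComplexOrder

/-- The weighted generalized `s`-mean of a positive definite Hermitian matrix `X` with weight
`G`: `(tr (G X^s))^(1/s)` for `s ≠ 0` and `exp (tr (G log X))` for `s = 0`, the matrix power
and logarithm being taken via the spectral decomposition. -/
noncomputable def genMean {n : ℕ} (G : Matrix (Fin n) (Fin n) ℂ)
    {X : Matrix (Fin n) (Fin n) ℂ} (hX : X.IsHermitian) (s : ℝ) : ℝ :=
  if s = 0 then Real.exp ((G * hX.cfc Real.log).trace.re)
  else ((G * hX.cfc (fun x => x ^ s)).trace.re) ^ (1/s)

theorem gm_jensen_exp {n : ℕ} (w x : Fin n → ℝ) (hw : ∀ i, 0 ≤ w i) (hx : ∀ i, 0 < x i)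
    (h1 : ∑ i, w i = 1) (s : ℝ) :
    Real.exp (s * ∑ i, w i * Real.log (x i)) ≤ ∑ i, w i * x i ^ s := by
  have h := convexOn_exp.map_sum_le (t := Finset.univ) (w := w)
    (p := fun i => s * Real.log (x i)) (fun i _ => hw i) h1 (fun i _ => Set.mem_univ _)
  simp only [smul_eq_mul] at h
  calc _ = Real.exp (∑ i, w i * (s * Real.log (x i))) := by
        rw [Finset.mul_sum]; congr 1; exact Finset.sum_congr rfl fun i _ => by ring
    _ ≤ _ := h
    _ = _ := Finset.sum_congr rfl fun i _ => by rw [Real.rpow_def_of_pos (hx i), mul_comm s]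

theorem gm_jensen_pow {n : ℕ} (w x : Fin n → ℝ) (hw : ∀ i, 0 ≤ w i) (hx : ∀ i, 0 < x i)
    (h1 : ∑ i, w i = 1) (a b : ℝ) (ha : a ≠ 0) (hab : 1 ≤ b / a) :
    (∑ i, w i * x i ^ a) ^ (b / a) ≤ ∑ i, w i * x i ^ b := by
  have h := Real.rpow_arith_mean_le_arith_mean_rpow Finset.univ w (fun i => x i ^ a)
    (fun i _ => hw i) h1 (fun i _ => (Real.rpow_pos_of_pos (hx i) a).le) hab
  refine h.trans (le_of_eq (Finset.sum_congr rfl fun i _ => ?_))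
  rw [← Real.rpow_mul (hx i).le, mul_div_cancel₀ _ ha]

/-- scalar weighted mean -/
noncomputable def gmScalar {n : ℕ} (w x : Fin n → ℝ) (s : ℝ) : ℝ :=
  if s = 0 then Real.exp (∑ i, w i * Real.log (x i)) else (∑ i, w i * x i ^ s) ^ (1 / s)

theorem gmScalar_mono {n : ℕ} (w x : Fin n → ℝ) (hw : ∀ i, 0 ≤ w i) (hx : ∀ i, 0 < x i)
    (h1 : ∑ i, w i = 1) (r s : ℝ) (hrs : r ≤ s) : gmScalar w x r ≤ gmScalar w x s := by
  have hP : ∀ s : ℝ, 0 < ∑ i, w i * x i ^ s := fun s =>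
    (Real.exp_pos _).trans_le (gm_jensen_exp w x hw hx h1 s)
  have hE : ∀ s : ℝ, s ≠ 0 → Real.exp (∑ i, w i * Real.log (x i)) =
      (Real.exp (s * ∑ i, w i * Real.log (x i))) ^ (1 / s) := by
    intro s hs
    rw [← Real.exp_mul]; congr 1; field_simp
  have hpos : ∀ s, 0 ≤ s → gmScalar w x 0 ≤ gmScalar w x s := by
    intro s hs
    rcases hs.eq_or_lt with rfl | hs
    · exact le_rfl
    · rw [gmScalar, gmScalar, if_pos rfl, if_neg hs.ne', hE s hs.ne']
      exact Real.rpow_le_rpow (Real.exp_pos _).le (gm_jensen_exp w x hw hx h1 s) (by positivity)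
  have hneg : ∀ s, s ≤ 0 → gmScalar w x s ≤ gmScalar w x 0 := by
    intro s hs
    rcases hs.eq_or_lt with rfl | hs
    · exact le_rfl
    · rw [gmScalar, gmScalar, if_pos rfl, if_neg hs.ne, hE s hs.ne]
      exact Real.rpow_le_rpow_of_nonpos (Real.exp_pos _) (gm_jensen_exp w x hw hx h1 s)
        (one_div_nonpos.2 hs.le)
  rcases le_or_gt r 0 with hr | hr
  · rcases le_or_gt 0 s with hs | hs
    · exact (hneg r hr).trans (hpos s hs)
    · have hr : r < 0 := hrs.trans_lt hs
      rw [gmScalar, gmScalar, if_neg hr.ne, if_neg hs.ne]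
      have h := Real.rpow_le_rpow_of_nonpos (Real.rpow_pos_of_pos (hP s) _)
        (gm_jensen_pow w x hw hx h1 s r hs.ne ((one_le_div_of_neg hs).2 hrs))
        (one_div_nonpos.2 hr.le)
      refine h.trans (le_of_eq ?_)
      rw [← Real.rpow_mul (hP s).le]
      congr 1
      have := hr.ne
      field_simp
  · have hs : 0 < s := hr.trans_le hrs
    rw [gmScalar, gmScalar, if_neg hr.ne', if_neg hs.ne']
    have h := Real.rpow_le_rpow (Real.rpow_pos_of_pos (hP r) _).le
      (gm_jensen_pow w x hw hx h1 r s hr.ne' ((one_le_div hr).2 hrs))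
      (one_div_nonneg.2 hs.le)
    refine le_trans (le_of_eq ?_) h
    rw [← Real.rpow_mul (hP r).le]
    congr 1
    have := hs.ne'
    field_simp

theorem gm_trace {n : ℕ} (X G : Matrix (Fin n) (Fin n) ℂ) (hX : X.IsHermitian) (f : ℝ → ℝ) :
    (G * hX.cfc f).trace.re = ∑ i, (((hX.eigenvectorUnitary : Matrix (Fin n) (Fin n) ℂ)ᴴ * G *
      (hX.eigenvectorUnitary : Matrix (Fin n) (Fin n) ℂ)) i i).re * f (hX.eigenvalues i) := by
  have : (G * hX.cfc f).trace = (((hX.eigenvectorUnitary : Matrix (Fin n) (Fin n) ℂ)ᴴ * G *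
      (hX.eigenvectorUnitary : Matrix (Fin n) (Fin n) ℂ)) *
      diagonal (fun i => ((f (hX.eigenvalues i) : ℝ) : ℂ))).trace := by
    rw [Matrix.IsHermitian.cfc, Unitary.conjStarAlgAut_apply, Matrix.star_eq_conjTranspose,
      ← Matrix.mul_assoc, Matrix.trace_mul_comm, ← Matrix.mul_assoc, ← Matrix.mul_assoc]
    rfl
  rw [this, Matrix.trace, Complex.re_sum]
  refine Finset.sum_congr rfl fun i _ => ?_
  rw [Matrix.diag_apply, Matrix.mul_diagonal, Complex.re_mul_ofReal]

/-- comparability of the weighted generalized means.  For a real symmetric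
positive definite `X` and a real symmetric positive semidefinite weight `G` with `tr G = 1`,
`M_r(X) ≤ M_s(X)` whenever `-1 ≤ r ≤ s ≤ 1`. -/
theorem genMean_comparable {n : ℕ} (X G : Matrix (Fin n) (Fin n) ℂ)
    (hXre : ∀ i j, (X i j).im = 0) (hX : X.PosDef)
    (hGre : ∀ i j, (G i j).im = 0) (hG : G.PosSemidef) (hGtr : G.trace = 1)
    (r s : ℝ) (hr : -1 ≤ r) (hrs : r ≤ s) (hs : s ≤ 1) :
    genMean G hX.1 r ≤ genMean G hX.1 s := by
  set U := (hX.1.eigenvectorUnitary : Matrix (Fin n) (Fin n) ℂ) with hU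
  have hkey : ∀ s, genMean G hX.1 s =
      gmScalar (fun i => ((Uᴴ * G * U) i i).re) hX.1.eigenvalues s := by
    intro s
    rw [genMean, gmScalar, gm_trace, gm_trace]
  have hps : (Uᴴ * G * U).PosSemidef := hG.conjTranspose_mul_mul_same U
  rw [hkey, hkey]
  refine gmScalar_mono _ _ (fun i => ?_) (fun i => hX.eigenvalues_pos i) ?_ r s hrs
  · exact (Complex.le_def.1 (hps.diag_nonneg (i := i))).1
  · have h : (Uᴴ * G * U).trace = 1 := by
      rw [Matrix.trace_mul_comm, ← Matrix.mul_assoc, ← Matrix.star_eq_conjTranspose, hU,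
        Unitary.mul_star_self_of_mem hX.1.eigenvectorUnitary.2, one_mul, hGtr]
    have h2 := congrArg Complex.re h
    rwa [Matrix.trace, Complex.re_sum, Complex.one_re] at h2
end

section
/- Let η > 0 and let E be a 2×2 real symmetric positive definite matrix (viewed as complex Hermitian) satisfying both E ≥ ((2η+1)/4) I₂ and E ≥ F_R(η)⁻¹ in the Loewner order, where F_R(η) := (1/(η(η+1))) [[2η+1, −i],[i, 2η+1]]. Then the unweighted generalized mean errors obey: ((1/2) tr E^s)^{1/s} ≥ (2η+1)/4 for every s ∈ [−1, 0); √(det E) ≥ (η+1)/2; and ((1/2) tr E^s)^{1/s} ≥ (η+1)/2 for every s ∈ (0, 1]. -/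
open Matrix ComplexOrder

/-- The RLD-based quantum Fisher information matrix
`F_R(η) = (1/(η(η+1))) [[2η+1, -i],[i, 2η+1]]`. -/
noncomputable def FR (η : ℝ) : Matrix (Fin 2) (Fin 2) ℂ :=
  (((η * (η + 1))⁻¹ : ℝ) : ℂ) •
    !![((2*η+1 : ℝ) : ℂ), -Complex.I; Complex.I, ((2*η+1 : ℝ) : ℂ)]

theorem cfc_trace_re_aux (E : Matrix (Fin 2) (Fin 2) ℂ) (hE : E.IsHermitian) (f : ℝ → ℝ) :
    (hE.cfc f).trace.re = f (hE.eigenvalues 0) + f (hE.eigenvalues 1) := by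
  rw [Matrix.IsHermitian.cfc, Unitary.conjStarAlgAut_apply, Matrix.trace_mul_comm, ← mul_assoc]
  simp [Matrix.trace_fin_two]

theorem FR_inv_aux (η : ℝ) (hη : 0 < η) : (FR η)⁻¹ =
    !![(((2*η+1)/4 : ℝ) : ℂ), Complex.I/4; -Complex.I/4, (((2*η+1)/4 : ℝ) : ℂ)] := by
  apply Matrix.inv_eq_right_inv
  have h1 : (η : ℂ) ≠ 0 := by exact_mod_cast hη.ne'
  have h2 : (η : ℂ) + 1 ≠ 0 := by exact_mod_cast (by positivity : η + 1 ≠ 0)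
  have hI := Complex.I_sq
  ext i j
  fin_cases i <;> fin_cases j <;> simp [FR, Matrix.mul_apply, Fin.sum_univ_two] <;> field_simp <;>
    ring_nf <;> simp [hI] <;> ring_nf

theorem eig_aux (η : ℝ) (hη : 0 < η) (E : Matrix (Fin 2) (Fin 2) ℂ)
    (hEre : ∀ i j, (E i j).im = 0) (hE : E.IsHermitian)
    (hRLD : (E - (FR η)⁻¹).PosSemidef) :
    (2*η+1)/4 ≤ hE.eigenvalues 0 ∧ (2*η+1)/4 ≤ hE.eigenvalues 1 ∧
    ((η+1)/2)^2 ≤ hE.eigenvalues 0 * hE.eigenvalues 1 ∧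
    E.det.re = hE.eigenvalues 0 * hE.eigenvalues 1 := by
  have ht := congrArg Complex.re hE.trace_eq_sum_eigenvalues
  have hd := congrArg Complex.re hE.det_eq_prod_eigenvalues
  have hs : (E 1 0).re = (E 0 1).re := by
    have := congrArg Complex.re (hE.apply 0 1)
    simpa using this
  have h0 := (Complex.le_def.1 (hRLD.diag_nonneg (i := 0))).1
  have h1 := (Complex.le_def.1 (hRLD.diag_nonneg (i := 1))).1
  have h2 := (Complex.le_def.1 hRLD.det_nonneg).1
  rw [FR_inv_aux η hη] at h0 h1 h2
  have hd' : E.det.re = hE.eigenvalues 0 * hE.eigenvalues 1 := by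
    rw [hd]; simp [Fin.prod_univ_two]
  have hd2 : E.det.re = (E 0 0).re * (E 1 1).re - (E 0 1).re * (E 0 1).re := by
    simp [Matrix.det_fin_two, hEre, hs]
  simp [Matrix.trace_fin_two, Fin.sum_univ_two] at ht
  rw [Matrix.det_fin_two] at h2
  simp only [Matrix.sub_apply, Matrix.of_apply, Matrix.cons_val', Matrix.cons_val_zero,
    Matrix.cons_val_one, Matrix.cons_val_fin_one, Complex.sub_re, Complex.sub_im, Complex.mul_re,
    Complex.ofReal_re, Complex.ofReal_im, hEre, hs, Complex.zero_re] at h0 h1 h2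
  norm_num at h2
  rw [hd2] at hd'
  rw [hd2]
  generalize hE.eigenvalues 0 = a at *
  generalize hE.eigenvalues 1 = b at *
  generalize (E 0 0).re = p at *
  generalize (E 1 1).re = q at *
  generalize (E 0 1).re = r at *
  obtain ⟨c, hc⟩ : ∃ c, c = (2*η+1)/4 := ⟨_, rfl⟩
  have hη' : η = 2*c - 1/2 := by linarith
  rw [← hc] at h0 h1 h2 ⊢
  subst hη'
  have hc4 : 0 < c := by linarith
  have hab : 1/16 ≤ (a-c)*(b-c) := by nlinarith
  have hsum : 0 ≤ (a-c)+(b-c) := by linarith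
  have ha : c ≤ a := by
    by_contra hlt
    push Not at hlt
    nlinarith
  have hb : c ≤ b := by
    by_contra hlt
    push Not at hlt
    nlinarith
  have hs2 : 1/2 ≤ (a-c)+(b-c) := by
    nlinarith [sq_nonneg ((a-c)-(b-c))]
  refine ⟨ha, hb, ?_, hd'⟩
  nlinarith

/-- Let `η > 0` and let `E` be a `2×2` real symmetric positive definite matrix
(viewed as complex Hermitian) with `E ≥ ((2η+1)/4) I₂` and `E ≥ F_R(η)⁻¹` in the Loewner
order.  Then `((1/2) tr E^s)^(1/s) ≥ (2η+1)/4` for `s ∈ [-1,0)`, `√(det E) ≥ (η+1)/2`, and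
`((1/2) tr E^s)^(1/s) ≥ (η+1)/2` for `s ∈ (0,1]`, where `E^s` is the matrix power via the
spectral decomposition. -/
theorem coherent_signal_error_bounds (η : ℝ) (hη : 0 < η)
    (E : Matrix (Fin 2) (Fin 2) ℂ)
    (hEre : ∀ i j, (E i j).im = 0) (hE : E.PosDef)
    (hSLD : (E - (((2*η+1)/4 : ℝ) : ℂ) • (1 : Matrix (Fin 2) (Fin 2) ℂ)).PosSemidef)
    (hRLD : (E - (FR η)⁻¹).PosSemidef) :
    (∀ s : ℝ, s ∈ Set.Ico (-1 : ℝ) 0 →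
      ((1/2) * (hE.1.cfc (fun x => x ^ s)).trace.re) ^ (1/s) ≥ (2*η+1)/4) ∧
    Real.sqrt E.det.re ≥ (η+1)/2 ∧
    (∀ s : ℝ, s ∈ Set.Ioc (0 : ℝ) 1 →
      ((1/2) * (hE.1.cfc (fun x => x ^ s)).trace.re) ^ (1/s) ≥ (η+1)/2) := by
  obtain ⟨ha, hb, hab, hdet⟩ := eig_aux η hη E hEre hE.1 hRLD
  have hc : 0 < (2*η+1)/4 := by positivity
  have hm : 0 < (η+1)/2 := by positivity
  refine ⟨?_, ?_, ?_⟩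
  · intro s hs
    rw [cfc_trace_re_aux]
    have hs0 : s < 0 := hs.2
    have h1 := Real.rpow_le_rpow_of_nonpos hc ha hs0.le
    have h2 := Real.rpow_le_rpow_of_nonpos hc hb hs0.le
    have h3 := Real.rpow_pos_of_pos (hc.trans_le ha) s
    have h4 := Real.rpow_pos_of_pos (hc.trans_le hb) s
    have hi : 1/s ≤ 0 := (one_div_neg.2 hs0).le
    calc (2*η+1)/4 = (((2*η+1)/4) ^ s) ^ (1/s) := by
          rw [← Real.rpow_mul hc.le, mul_one_div_cancel hs0.ne, Real.rpow_one]
      _ ≤ _ := Real.rpow_le_rpow_of_nonpos (by linarith) (by linarith) hi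
  · rw [hdet]
    exact Real.le_sqrt_of_sq_le hab
  · intro s hs
    rw [cfc_trace_re_aux]
    have hs0 : 0 < s := hs.1
    have h3 := Real.rpow_pos_of_pos (hc.trans_le ha) s
    have h4 := Real.rpow_pos_of_pos (hc.trans_le hb) s
    have h5 := Real.rpow_pos_of_pos hm s
    have h6 := Real.rpow_le_rpow (by positivity) hab hs0.le
    rw [Real.mul_rpow (hc.trans_le ha).le (hc.trans_le hb).le, pow_two,
      Real.mul_rpow hm.le hm.le] at h6
    have hi : 0 ≤ 1/s := (one_div_pos.2 hs0).le
    calc (η+1)/2 = (((η+1)/2) ^ s) ^ (1/s) := by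
          rw [← Real.rpow_mul hm.le, mul_one_div_cancel hs0.ne', Real.rpow_one]
      _ ≤ _ := by
        refine Real.rpow_le_rpow h5.le ?_ hi
        refine abs_le_of_sq_le_sq' ?_ (by linarith) |>.2
        nlinarith [sq_nonneg ((hE.1.eigenvalues 0) ^ s - (hE.1.eigenvalues 1) ^ s)]
end
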